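/- Let F(t) = Σ_{n∈ℤ} c_n e^{2πint} be an absolutely convergent Fourier series (i.e. Σ_n |c_n| < ∞), and let h be a holomorphic function on an open neighborhood of the closure of the range of F. Then the function t ↦ h(F(t)) also admits an absolutely convergent Fourier series expansion, i.e. there exist coefficients d_n ∈ ℂ with Σ_n |d_n| < ∞ and h(F(t)) = Σ_{n∈ℤ} d_n e^{2πint} for all t ∈ ℝ. -/

import Mathlib

open Complex Real

/-- `f` is the sum of an absolutely convergent Fourier series whose coefficients have
`ℓ¹`-norm at most `B`. -/
def HasAbsFourierSeries (f : ℝ → ℂ) (B : ℝ) : Prop :=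
  ∃ b : ℤ → ℂ, Summable (fun n => ‖b n‖) ∧ ∑' n, ‖b n‖ ≤ B ∧
    ∀ t : ℝ, f t = ∑' n : ℤ, b n * Complex.exp (2 * π * Complex.I * n * t)

theorem norm_exp_fourier (n : ℤ) (t : ℝ) : ‖Complex.exp (2 * π * Complex.I * n * t)‖ = 1 := by
  have : (2 * π * Complex.I * n * t : ℂ) = ((2 * π * n * t : ℝ) : ℂ) * Complex.I := by
    push_cast; ring
  rw [this, Complex.norm_exp_ofReal_mul_I]

namespace HasAbsFourierSeries

variable {f g : ℝ → ℂ} {B C : ℝ}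

theorem nonneg (hf : HasAbsFourierSeries f B) : 0 ≤ B := by
  obtain ⟨b, -, hB, -⟩ := hf
  exact (tsum_nonneg fun _ => norm_nonneg _).trans hB

theorem norm_le (hf : HasAbsFourierSeries f B) (t : ℝ) : ‖f t‖ ≤ B := by
  obtain ⟨b, hb, hB, h⟩ := hf
  rw [h]
  refine (norm_tsum_le_tsum_norm ?_).trans ?_
  · simpa [norm_exp_fourier] using hb
  · simpa [norm_exp_fourier] using hB

theorem one : HasAbsFourierSeries (fun _ => 1) 1 := by
  refine ⟨Pi.single 0 1, ?_, ?_, fun t => ?_⟩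
  · exact summable_of_ne_finset_zero (s := {0}) (by simp +contextual)
  · rw [tsum_eq_single 0 (by simp +contextual)]; simp
  · rw [tsum_eq_single 0 (by simp +contextual)]; simp

theorem mul (hf : HasAbsFourierSeries f B) (hg : HasAbsFourierSeries g C) :
    HasAbsFourierSeries (fun t => f t * g t) (B * C) := by
  have hB0 := hf.nonneg
  obtain ⟨b, hb, hB, hfb⟩ := hf
  obtain ⟨c, hc, hC, hgc⟩ := hg
  let e : ℤ × ℤ ≃ ℤ × ℤ :=
    { toFun := fun p => (p.2, p.1 - p.2)
      invFun := fun p => (p.1 + p.2, p.1)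
      left_inv := fun p => by ext <;> simp
      right_inv := fun p => by ext <;> simp }
  have hG : Summable fun p : ℤ × ℤ => ‖b p.2 * c (p.1 - p.2)‖ :=
    e.summable_iff.mpr (hb.mul_norm hc)
  have hGk := fun k => hG.prod_factor k
  have hle : ∀ k, ‖∑' m, b m * c (k - m)‖ ≤ ∑' m, ‖b m * c (k - m)‖ :=
    fun k => norm_tsum_le_tsum_norm (hGk k)
  have hsum : Summable fun k => ‖∑' m, b m * c (k - m)‖ :=
    .of_nonneg_of_le (fun _ => norm_nonneg _) hle hG.prod
  refine ⟨fun k => ∑' m, b m * c (k - m), hsum, ?_, fun t => ?_⟩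
  · calc ∑' k, ‖∑' m, b m * c (k - m)‖ ≤ ∑' k, ∑' m, ‖b m * c (k - m)‖ :=
          hsum.tsum_le_tsum hle hG.prod
      _ = ∑' p : ℤ × ℤ, ‖b p.2 * c (p.1 - p.2)‖ := hG.tsum_prod.symm
      _ = ∑' p : ℤ × ℤ, ‖b p.1 * c p.2‖ := e.tsum_eq (fun p : ℤ × ℤ => ‖b p.1 * c p.2‖)
      _ = (∑' m, ‖b m‖) * ∑' n, ‖c n‖ := by
          simp_rw [norm_mul]
          rw [hb.tsum_mul_tsum hc (by simpa only [norm_mul] using hb.mul_norm hc)]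
      _ ≤ B * C := by gcongr
  · set E : ℤ → ℂ := fun n => Complex.exp (2 * π * Complex.I * n * t) with hE
    have hb' : Summable fun n => ‖b n * E n‖ := by simpa [hE, norm_exp_fourier] using hb
    have hc' : Summable fun n => ‖c n * E n‖ := by simpa [hE, norm_exp_fourier] using hc
    have hadd : ∀ k m, E m * E (k - m) = E k := fun k m => by
      simp only [hE, ← Complex.exp_add]; congr 1; push_cast; ring
    have hs : Summable fun p : ℤ × ℤ => b p.2 * c (p.1 - p.2) * E p.1 := by
      refine Summable.of_norm ?_
      simpa [hE, norm_exp_fourier] using hG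
    beta_reduce
    rw [hfb, hgc, tsum_mul_tsum_of_summable_norm hb' hc', ← e.tsum_eq]
    calc ∑' p : ℤ × ℤ, b p.2 * E p.2 * (c (p.1 - p.2) * E (p.1 - p.2))
        = ∑' p : ℤ × ℤ, b p.2 * c (p.1 - p.2) * E p.1 := by
          congr 1; ext p; rw [← hadd p.1 p.2]; ring
      _ = ∑' k, ∑' m, b m * c (k - m) * E k := hs.tsum_prod
      _ = ∑' k, (∑' m, b m * c (k - m)) * E k := by simp_rw [tsum_mul_right]

theorem pow (hf : HasAbsFourierSeries f B) (n : ℕ) :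
    HasAbsFourierSeries (fun t => f t ^ n) (B ^ n) := by
  induction n with
  | zero => simpa using one
  | succ n ih => simpa only [pow_succ] using ih.mul hf

theorem tsum {f : ℕ → ℝ → ℂ} {B : ℕ → ℝ} (hf : ∀ k, HasAbsFourierSeries (f k) (B k))
    (hB : Summable B) : HasAbsFourierSeries (fun t => ∑' k, f k t) (∑' k, B k) := by
  choose b hb hbB hfb using hf
  have hN : Summable fun k => ∑' n, ‖b k n‖ :=
    .of_nonneg_of_le (fun _ => tsum_nonneg fun _ => norm_nonneg _) hbB hB
  have hp : Summable fun p : ℕ × ℤ => ‖b p.1 p.2‖ :=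
    (summable_prod_of_nonneg fun _ => norm_nonneg _).mpr ⟨hb, hN⟩
  have hs : Summable fun p : ℤ × ℕ => ‖b p.2 p.1‖ := hp.prod_symm
  have hle : ∀ n, ‖∑' k, b k n‖ ≤ ∑' k, ‖b k n‖ :=
    fun n => norm_tsum_le_tsum_norm (hs.prod_factor n)
  have hsum : Summable fun n => ‖∑' k, b k n‖ :=
    .of_nonneg_of_le (fun _ => norm_nonneg _) hle hs.prod
  refine ⟨fun n => ∑' k, b k n, hsum, ?_, fun t => ?_⟩
  · calc ∑' n, ‖∑' k, b k n‖ ≤ ∑' n, ∑' k, ‖b k n‖ := hsum.tsum_le_tsum hle hs.prod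
      _ = ∑' k, ∑' n, ‖b k n‖ := Summable.tsum_comm hp
      _ ≤ ∑' k, B k := hN.tsum_le_tsum hbB hB
  · have hpt : Summable (Function.uncurry fun (k : ℕ) (n : ℤ) =>
        b k n * Complex.exp (2 * π * Complex.I * n * t)) := by
      refine Summable.of_norm ?_
      simpa [Function.uncurry_def, norm_exp_fourier] using hp
    simp_rw [hfb, ← tsum_mul_right]
    exact (Summable.tsum_comm hpt).symm

end HasAbsFourierSeries

theorem norm_fourierCoeffOn_le {a b : ℝ} (hab : a < b) {f : ℝ → ℂ} {M : ℝ} (hf : ∀ t, ‖f t‖ ≤ M)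
    (n : ℤ) : ‖fourierCoeffOn hab f n‖ ≤ M := by
  have hpos : 0 < b - a := sub_pos.mpr hab
  rw [fourierCoeffOn_eq_integral, norm_smul, Real.norm_of_nonneg (by positivity)]
  have : ‖∫ x in a..b, fourier (-n) (x : AddCircle (b - a)) • f x‖ ≤ M * |b - a| := by
    refine intervalIntegral.norm_integral_le_of_norm_le_const fun x _ => ?_
    rw [norm_smul, fourier_apply, Circle.norm_coe, one_mul]
    exact hf x
  rw [abs_of_pos hpos] at this
  calc _ ≤ 1 / (b - a) * (M * (b - a)) := by gcongr
    _ = M := by field_simp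

theorem norm_fourierCoeffOn_of_hasDerivAt {f f' : ℝ → ℂ} {n : ℤ} (hn : n ≠ 0)
    (hab : (0 : ℝ) < 0 + 1) (hf : ∀ t, HasDerivAt f (f' t) t) (hf' : Continuous f')
    (hper : f 0 = f 1) :
    ‖fourierCoeffOn hab f n‖ = ‖fourierCoeffOn hab f' n‖ / (2 * π * |(n : ℝ)|) := by
  rw [fourierCoeffOn_of_hasDerivAt hab hn (fun x _ => hf x) (hf'.intervalIntegrable _ _)]
  simp [hper, abs_of_pos Real.pi_pos, div_eq_inv_mul]

theorem Function.Periodic.deriv {𝕜 E : Type*} [NontriviallyNormedField 𝕜] [NormedAddCommGroup E]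
    [NormedSpace 𝕜 E] {f : 𝕜 → E} {c : 𝕜} (hf : Function.Periodic f c) :
    Function.Periodic (deriv f) c := fun z => by
  rw [← deriv_comp_add_const, funext hf]

/-- The `ℓ¹`-norm of the Fourier coefficients of a `1`-periodic holomorphic function is controlled
by its supremum on a horizontal strip. -/
theorem exists_hasAbsFourierSeries_of_strip {δ : ℝ} (hδ : 0 < δ) :
    ∃ C : ℝ, ∀ (g : ℂ → ℂ) (M : ℝ), Function.Periodic g 1 →
      DifferentiableOn ℂ g {z | |z.im| < δ} → (∀ z : ℂ, |z.im| < δ → ‖g z‖ ≤ M) →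
      HasAbsFourierSeries (fun t : ℝ => g t) (M * C) := by
  let D : ℤ → ℝ := fun n => if n = 0 then 1 else (2 / (δ / 2) ^ 2) * (1 / (n : ℝ) ^ 2)
  have hD : Summable D := by
    refine Summable.congr_cofinite
      ((Real.summable_one_div_int_pow.mpr one_lt_two).mul_left (2 / (δ / 2) ^ 2)) ?_
    filter_upwards [(Set.finite_singleton (0 : ℤ)).compl_mem_cofinite] with n hn
    simp only [Set.mem_compl_iff, Set.mem_singleton_iff] at hn
    simp [D, hn]
  refine ⟨∑' n, D n, fun g M hper hg hM => ?_⟩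
  have hM0 : 0 ≤ M := (norm_nonneg _).trans (hM 0 (by simpa))
  have hopen : IsOpen {z : ℂ | |z.im| < δ} :=
    isOpen_lt (by fun_prop) continuous_const
  have hg1 : DifferentiableOn ℂ (deriv g) {z | |z.im| < δ} := hg.deriv hopen
  have hg2 : DifferentiableOn ℂ (deriv (deriv g)) {z | |z.im| < δ} := hg1.deriv hopen
  have hreal : ∀ t : ℝ, {z : ℂ | |z.im| < δ} ∈ nhds (t : ℂ) :=
    fun t => hopen.mem_nhds (by simpa)
  have hd0 : ∀ t : ℝ, HasDerivAt (fun t : ℝ => g t) (deriv g t) t :=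
    fun t => ((hg.differentiableAt (hreal t)).hasDerivAt).comp_ofReal
  have hd1 : ∀ t : ℝ, HasDerivAt (fun t : ℝ => deriv g t) (deriv (deriv g) t) t :=
    fun t => ((hg1.differentiableAt (hreal t)).hasDerivAt).comp_ofReal
  have hd2 : Continuous fun t : ℝ => deriv (deriv g) t :=
    continuous_iff_continuousAt.mpr fun t =>
      ((hg2.differentiableAt (hreal t)).continuousAt).comp Complex.continuous_ofReal.continuousAt
  have hbd : ∀ t : ℝ, ‖deriv (deriv g) t‖ ≤ 2 * M / (δ / 2) ^ 2 := fun t => by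
    have hsub : ∀ z ∈ Metric.closedBall (t : ℂ) (δ / 2), |z.im| < δ := fun z hz => by
      have h1 := Complex.abs_im_le_norm (z - t)
      rw [mem_closedBall_iff_norm] at hz
      simp only [Complex.sub_im, Complex.ofReal_im, sub_zero] at h1
      linarith
    have := Complex.norm_iteratedDeriv_le_of_forall_mem_sphere_norm_le (c := (t : ℂ)) (f := g)
      (C := M) 2 (half_pos hδ) ((hg.mono hsub).diffContOnCl_ball subset_rfl)
      fun z hz => hM z (hsub z (Metric.sphere_subset_closedBall hz))
    simpa [iteratedDeriv_succ, iteratedDeriv_zero] using this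
  have hab : (0 : ℝ) < 0 + 1 := by norm_num
  have hp0 : (fun t : ℝ => g t) 0 = (fun t : ℝ => g t) 1 := by simpa using (hper 0).symm
  have hp1 : (fun t : ℝ => deriv g t) 0 = (fun t : ℝ => deriv g t) 1 := by
    simpa using (hper.deriv 0).symm
  have hc0 : Continuous fun t : ℝ => g t :=
    continuous_iff_continuousAt.mpr fun t => (hd0 t).continuousAt
  have hc1 : Continuous fun t : ℝ => deriv g t :=
    continuous_iff_continuousAt.mpr fun t => (hd1 t).continuousAt
  have hcoef : ∀ n, ‖fourierCoeffOn hab (fun t : ℝ => g t) n‖ ≤ M * D n := fun n => by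
    by_cases hn : n = 0
    · simpa [D, hn] using norm_fourierCoeffOn_le hab (fun t : ℝ => hM t (by simpa)) 0
    · rw [norm_fourierCoeffOn_of_hasDerivAt hn hab hd0 hc1 hp0,
        norm_fourierCoeffOn_of_hasDerivAt hn hab hd1 hd2 hp1]
      have hn' : 0 < |(n : ℝ)| := abs_pos.mpr (by exact_mod_cast hn)
      have hpi : |(n : ℝ)| ≤ 2 * π * |(n : ℝ)| :=
        le_mul_of_one_le_left hn'.le (by linarith [Real.pi_gt_three])
      calc _ ≤ 2 * M / (δ / 2) ^ 2 / |(n : ℝ)| / |(n : ℝ)| := by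
            gcongr
            exact norm_fourierCoeffOn_le hab hbd n
        _ = M * D n := by
            simp only [D, hn, if_false, ← sq_abs (n : ℝ)]
            field_simp
  have : Fact ((0 : ℝ) < 1) := ⟨one_pos⟩
  let G : C(AddCircle (1 : ℝ), ℂ) :=
    ⟨AddCircle.liftIco 1 0 fun t : ℝ => g t,
      AddCircle.liftIco_continuous (by simpa using hp0) hc0.continuousOn⟩
  have hperR : Function.Periodic (fun t : ℝ => g t) 1 := fun t => by simpa using hper t
  have hGt : ∀ t : ℝ, G t = g t := fun t => by
    have h1 : ((Int.fract t : ℝ) : AddCircle (1 : ℝ)) = t := by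
      rw [← Int.self_sub_floor, AddCircle.coe_sub]
      simp
    have h2 : g (Int.fract t : ℝ) = g t := by
      rw [← Int.self_sub_floor]
      simpa using hperR.sub_zsmul_eq (x := t) ⌊t⌋
    rw [← h1, ← h2]
    exact AddCircle.liftIco_coe_apply (f := fun t : ℝ => g t)
      ⟨Int.fract_nonneg t, by simpa using Int.fract_lt_one t⟩
  have hGc : ∀ n, fourierCoeff G n = fourierCoeffOn hab (fun t : ℝ => g t) n :=
    fun n => fourierCoeff_liftIco_eq _ n
  have hs : Summable fun n => ‖fourierCoeffOn hab (fun t : ℝ => g t) n‖ :=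
    .of_nonneg_of_le (fun _ => norm_nonneg _) hcoef (hD.mul_left M)
  refine ⟨fourierCoeffOn hab fun t : ℝ => g t, hs, ?_, fun t => ?_⟩
  · rw [← tsum_mul_left]
    exact hs.tsum_le_tsum hcoef (hD.mul_left M)
  · have hsG : Summable (fourierCoeff G) := by
      rw [funext hGc]; exact hs.of_norm
    have := has_pointwise_sum_fourier_series_of_summable hsG t
    rw [hGt] at this
    beta_reduce
    rw [← this.tsum_eq]
    simp_rw [hGc, fourier_coe_apply, smul_eq_mul, Complex.ofReal_one, div_one]

/-- A trigonometric polynomial varies little in narrow horizontal strips, uniformly in the real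
part. -/
theorem exists_strip_norm_trigPoly_sub_le (s : Finset ℤ) (c : ℤ → ℂ) {ε : ℝ} (hε : 0 < ε) :
    ∃ δ > 0, ∀ z : ℂ, |z.im| < δ →
      ‖∑ n ∈ s, c n * Complex.exp (2 * π * Complex.I * n * z) -
        ∑ n ∈ s, c n * Complex.exp (2 * π * Complex.I * n * z.re)‖ ≤ ε := by
  have hcont : Continuous fun y : ℝ =>
      ∑ n ∈ s, ‖c n‖ * ‖Complex.exp (2 * π * Complex.I * n * (y * Complex.I)) - 1‖ := by
    fun_prop
  obtain ⟨δ, hδ, h⟩ := Metric.continuous_iff.mp hcont 0 ε hε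
  refine ⟨δ, hδ, fun z hz => ?_⟩
  have h1 := h z.im (by simpa [Real.dist_eq] using hz)
  simp only [Complex.ofReal_zero, zero_mul, mul_zero, Complex.exp_zero, sub_self, norm_zero,
    Finset.sum_const_zero, Real.dist_eq, sub_zero] at h1
  refine le_trans ?_ ((le_abs_self _).trans h1.le)
  rw [← Finset.sum_sub_distrib]
  refine norm_sum_le_of_le _ fun n _ => ?_
  have h2 : Complex.exp (2 * π * Complex.I * n * z) =
      Complex.exp (2 * π * Complex.I * n * z.re) *
        Complex.exp (2 * π * Complex.I * n * (z.im * Complex.I)) := by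
    rw [← Complex.exp_add, ← mul_add, Complex.re_add_im]
  rw [h2, ← mul_sub, norm_mul, ← mul_sub_one, norm_mul, norm_exp_fourier, one_mul]

/-- **Wiener–Levi Theorem for Fourier series.** If `F t = Σ_{n ∈ ℤ} c n e^{2πint}` is an
absolutely convergent Fourier series and `h` is holomorphic on an open neighborhood of the
closure of the range of `F`, then `h ∘ F` also admits an absolutely convergent Fourier series
expansion. -/
theorem wiener_levi_fourier_series
    (c : ℤ → ℂ) (hc : Summable fun n => ‖c n‖)
    (F : ℝ → ℂ)
    (hF : ∀ t : ℝ, F t = ∑' n : ℤ, c n * Complex.exp (2 * π * Complex.I * n * t))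
    (h : ℂ → ℂ) (V : Set ℂ) (hV : IsOpen V)
    (hKV : closure (Set.range F) ⊆ V)
    (hh : DifferentiableOn ℂ h V) :
    ∃ b : ℤ → ℂ, Summable (fun n => ‖b n‖) ∧
      ∀ t : ℝ, h (F t) = ∑' n : ℤ, b n * Complex.exp (2 * π * Complex.I * n * t) := by
  set K := closure (Set.range F)
  have hFA : HasAbsFourierSeries F (∑' n, ‖c n‖) := ⟨c, hc, le_rfl, hF⟩
  have hKc : IsCompact K := by
    refine Bornology.IsBounded.isCompact_closure ?_
    refine isBounded_iff_forall_norm_le.mpr ⟨∑' n, ‖c n‖, ?_⟩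
    rintro _ ⟨t, rfl⟩
    exact hFA.norm_le t
  obtain ⟨R, hR, hRV⟩ := hKc.exists_cthickening_subset_open hV hKV
  obtain ⟨M, hM⟩ := hKc.cthickening.exists_bound_of_continuousOn (hh.continuousOn.mono hRV)
  have hR4 : 0 < R / 4 := by positivity
  have hR2 : 0 < R / 2 := by positivity
  obtain ⟨s, hs⟩ : ∃ s : Finset ℤ, ∑' n : {n // n ∉ s}, ‖c n‖ < R / 4 :=
    ((tendsto_order.1 (tendsto_tsum_compl_atTop_zero fun n => ‖c n‖)).2 _ hR4).exists
  set P : ℂ → ℂ := fun z => ∑ n ∈ s, c n * Complex.exp (2 * π * Complex.I * n * z) with hP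
  have hPper : Function.Periodic P 1 := fun z => by
    simp only [hP]
    refine Finset.sum_congr rfl fun n _ => ?_
    rw [mul_add, Complex.exp_add, mul_one, mul_comm _ (n : ℂ), Complex.exp_int_mul_two_pi_mul_I,
      mul_one]
  have hPd : Differentiable ℂ P := by fun_prop
  have hFP : HasAbsFourierSeries (fun t => F t - P t) (R / 4) := by
    have hind : (fun n => ‖(↑s : Set ℤ)ᶜ.indicator c n‖) =
        (↑s : Set ℤ)ᶜ.indicator fun n => ‖c n‖ := by
      ext n; rw [norm_indicator_eq_indicator_norm]
    refine ⟨(↑s : Set ℤ)ᶜ.indicator c, ?_, ?_, fun t => ?_⟩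
    · rw [hind]; exact hc.indicator _
    · rw [hind, ← tsum_subtype]; exact hs.le
    · have hsum : Summable fun n : ℤ => c n * Complex.exp (2 * π * Complex.I * n * t) :=
        Summable.of_norm (by simpa [norm_exp_fourier] using hc)
      beta_reduce
      rw [hF, ← hsum.sum_add_tsum_compl (s := s), hP, add_sub_cancel_left,
        tsum_subtype (↑s : Set ℤ)ᶜ fun n : ℤ => c n * Complex.exp (2 * π * Complex.I * n * t)]
      refine tsum_congr fun n => ?_
      by_cases hn : n ∈ s <;> simp [hn]
  obtain ⟨δ, hδ, hPδ⟩ := exists_strip_norm_trigPoly_sub_le s c hR4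
  obtain ⟨C, hC⟩ := exists_hasAbsFourierSeries_of_strip hδ
  have hball : ∀ z : ℂ, |z.im| < δ →
      Metric.closedBall (P z) (R / 2) ⊆ Metric.cthickening R K := fun z hz w hw => by
    refine Metric.mem_cthickening_of_dist_le w (F z.re) R K
      (subset_closure (Set.mem_range_self _)) ?_
    have h1 : dist w (P z) ≤ R / 2 := hw
    have h2 : dist (P z) (P z.re) ≤ R / 4 := by rw [dist_eq_norm]; exact hPδ z hz
    have h3 : dist (P z.re) (F z.re) ≤ R / 4 := by
      rw [dist_comm, dist_eq_norm]; exact hFP.norm_le z.re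
    linarith [dist_triangle4 w (P z) (P z.re) (F z.re)]
  have hgk : ∀ k : ℕ, HasAbsFourierSeries
      (fun t : ℝ => (k.factorial : ℂ)⁻¹ * iteratedDeriv k h (P t)) (M / (R / 2) ^ k * C) := by
    refine fun k => hC (fun z => (k.factorial : ℂ)⁻¹ * iteratedDeriv k h (P z)) _
      (fun z => by simp only [hPper z]) ?_ fun z hz => ?_
    · have han : DifferentiableOn ℂ (iteratedDeriv k h) V :=
        (iteratedDeriv_eq_iterate (f := h) (n := k)) ▸
          ((hh.analyticOnNhd hV).iterated_deriv k).differentiableOn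
      exact (han.comp hPd.differentiableOn fun z hz =>
        hRV (hball z hz (Metric.mem_closedBall_self hR2.le))).const_mul _
    · have := Complex.norm_iteratedDeriv_le_of_forall_mem_sphere_norm_le (c := P z) (f := h)
        (C := M) k hR2 ((hh.mono ((hball z hz).trans hRV)).diffContOnCl_ball subset_rfl)
        fun w hw => hM w (hball z hz (Metric.sphere_subset_closedBall hw))
      have hk : (0 : ℝ) < k.factorial := by positivity
      rw [norm_mul, norm_inv, Complex.norm_natCast, inv_mul_le_iff₀ hk, ← mul_div_assoc]
      exact this
  have hgeom : Summable fun k : ℕ => M / (R / 2) ^ k * C * (R / 4) ^ k := by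
    refine ((summable_geometric_two).mul_left (M * C)).congr fun k => ?_
    have : R / 4 = (1 / 2) * (R / 2) := by ring
    rw [this, mul_pow]
    field_simp
  obtain ⟨b, hb, -, hbt⟩ := HasAbsFourierSeries.tsum (fun k => (hgk k).mul (hFP.pow k)) hgeom
  refine ⟨b, hb, fun t => ?_⟩
  rw [← hbt t]
  have ht : |(t : ℂ).im| < δ := by simpa
  have hd : DifferentiableOn ℂ h (Metric.ball (P t) (R / 2)) :=
    hh.mono (Metric.ball_subset_closedBall.trans ((hball t ht).trans hRV))
  have hmem : F t ∈ Metric.ball (P t) (R / 2) := by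
    rw [mem_ball_iff_norm]
    linarith [hFP.norm_le t]
  rw [← (Complex.hasSum_taylorSeries_on_ball hd hmem).tsum_eq]
  refine tsum_congr fun k => ?_
  simp only [smul_eq_mul]
  ring
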